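/- Let F_y be the maximal isotropic flag (e_l ⊂ e_1 ⊂ e_2 ⊂ ⋯ ⊂ e_{l-1}) in ℂ^{2l}. Then the stabilizer of F_y in K, namely {g ∈ K : g·F_y = F_y}, equals B_{2l-2} := {g ∈ SO(2l) : g e_l = e_l, g e_{-l} = e_{-l}, and the matrix of g with respect to the ordered basis (e_1,…,e_l,e_{-l},…,e_{-1}) is upper triangular} (B_{2l-2} is a Borel subgroup of the copy of SO(2l-2) inside K). -/

import Mathlib

open Module Submodule

noncomputable section

/-- `stdVec n m` is the `m`-th standard basis vector of `ℂ^n` (1-indexed); `0` out of range. -/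
def stdVec (n m : ℕ) : Fin n → ℂ :=
  if h : 1 ≤ m ∧ m ≤ n then Pi.single (⟨m - 1, by omega⟩ : Fin n) 1 else 0

/-- `stdSub n k` is the subspace `U_k = span(e_1, …, e_k)` of `ℂ^n`. -/
def stdSub (n k : ℕ) : Submodule ℂ (Fin n → ℂ) :=
  span ℂ (stdVec n '' Set.Icc 1 k)

/-- The action of an invertible linear map of `ℂ^n` on a chain of subspaces. -/
def actFlag (n : ℕ) (g : (Fin n → ℂ) ≃ₗ[ℂ] (Fin n → ℂ))
    (V : ℕ → Submodule ℂ (Fin n → ℂ)) (k : ℕ) : Submodule ℂ (Fin n → ℂ) :=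
  Submodule.map g.toLinearMap (V k)

/-- The orbit of the chain `V` under a set `B` of invertible linear maps. -/
def orbitOf (n : ℕ) (B : Set ((Fin n → ℂ) ≃ₗ[ℂ] (Fin n → ℂ)))
    (V : ℕ → Submodule ℂ (Fin n → ℂ)) : Set (ℕ → Submodule ℂ (Fin n → ℂ)) :=
  {V' | ∃ b ∈ B, actFlag n b V = V'}

/-- The symmetric bilinear form `β(x,y) = ∑_{k=1}^n x_k y_{n+1-k}` on `ℂ^n`. -/
def betaF (n : ℕ) (x y : Fin n → ℂ) : ℂ := ∑ k : Fin n, x k * y k.rev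

/-- `SO(n,ℂ)` for the form `β`. -/
def SOgrp (n : ℕ) : Set ((Fin n → ℂ) ≃ₗ[ℂ] (Fin n → ℂ)) :=
  {g | LinearMap.det g.toLinearMap = 1 ∧ ∀ x y, betaF n (g x) (g y) = betaF n x y}

/-- A maximal isotropic flag `V 1 ⊂ ⋯ ⊂ V l` in `ℂ^n` (values pinned outside `1..l`
so that two flags are equal iff they agree in degrees `1, …, l`). -/
def IsIsoFlag (n l : ℕ) (V : ℕ → Submodule ℂ (Fin n → ℂ)) : Prop :=
  (∀ i, i ≤ l → finrank ℂ ↥(V i) = i) ∧ (∀ i, V i ≤ V (i + 1)) ∧ (∀ i, l ≤ i → V i = V l) ∧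
    (∀ u ∈ V l, ∀ w ∈ V l, betaF n u w = 0)

/-- The isotropic flag `(v 1 ⊂ ⋯ ⊂ v l)` spanned by `v 1, …, v l`. -/
def isoFlagOf (n l : ℕ) (v : ℕ → Fin n → ℂ) (k : ℕ) : Submodule ℂ (Fin n → ℂ) :=
  span ℂ (v '' Set.Icc 1 (min k l))

/-- `K = {g ∈ SO(2l) : g (e_l - e_{-l}) = e_l - e_{-l}}` (here `e_{-l} = e_{l+1}`),
a copy of `SO(2l-1)`. -/
def Keven (l : ℕ) : Set ((Fin (2 * l) → ℂ) ≃ₗ[ℂ] (Fin (2 * l) → ℂ)) :=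
  {g | g ∈ SOgrp (2 * l) ∧
       g (stdVec (2 * l) l - stdVec (2 * l) (l + 1)) =
         stdVec (2 * l) l - stdVec (2 * l) (l + 1)}

/-- `V'` lies in the `K`-orbit of `V`. -/
def InKEvenOrbit (l : ℕ) (V V' : ℕ → Submodule ℂ (Fin (2 * l) → ℂ)) : Prop :=
  ∃ g ∈ Keven l, actFlag (2 * l) g V = V'

/-- The maximal isotropic flag `F_y = (e_l ⊂ e_1 ⊂ e_2 ⊂ ⋯ ⊂ e_{l-1})` in `ℂ^{2l}`. -/
def FyEvenVec (l m : ℕ) : Fin (2 * l) → ℂ :=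
  if m = 1 then stdVec (2 * l) l else stdVec (2 * l) (m - 1)

def FyEvenFlag (l : ℕ) : ℕ → Submodule ℂ (Fin (2 * l) → ℂ) :=
  isoFlagOf (2 * l) l (FyEvenVec l)

/-- `B_{2l-2}`: elements of `SO(2l)` fixing `e_l` and `e_{-l}` whose matrix in the ordered
basis `(e_1, …, e_l, e_{-l}, …, e_{-1})` (the standard ordered basis) is upper triangular;
a Borel subgroup of the copy of `SO(2l-2)` inside `K`. -/
def BEvenSmall (l : ℕ) : Set ((Fin (2 * l) → ℂ) ≃ₗ[ℂ] (Fin (2 * l) → ℂ)) :=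
  {g | g ∈ SOgrp (2 * l) ∧
       g (stdVec (2 * l) l) = stdVec (2 * l) l ∧
       g (stdVec (2 * l) (l + 1)) = stdVec (2 * l) (l + 1) ∧
       ∀ m, 1 ≤ m → m ≤ 2 * l → g (stdVec (2 * l) m) ∈ stdSub (2 * l) m}

/-!
Write `U_k = span(e_1, …, e_k)` and `F_1 ⊂ ⋯ ⊂ F_l` for the flag `F_y`, so that
`F_{k+1} = U_k ⊕ ℂ e_l` for `k < l`. If `g` preserves `F_y` then `g e_l` is a multiple of `e_l`;
as `g` is an isometry fixing `e_l - e_{-l}`, which pairs nontrivially with `e_l`, it fixes `e_l`,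
hence also `e_{-l}`. The standard flag is then recovered from `F_y` and `e_{-l}`:
`U_m = F_{m+1} ∩ e_{-l}^⊥` for `m < l`, `U_l = F_l`, and `U_m = U_{2l-m}^⊥` for `m > l`.
So `g` preserves every `U_m`, which is upper triangularity.
-/

section Isometry

variable {R M : Type*} [CommRing R] [AddCommGroup M] [Module R M] {B : LinearMap.BilinForm R M}
  {f : End R M}

theorem orthogonal_mem_invtSubmodule_of_le_map (hf : B.IsOrthogonal f) {p : Submodule R M}
    (hp : p ≤ p.map f) : B.orthogonal p ∈ f.invtSubmodule := by
  intro x hx y hy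
  obtain ⟨z, hz, rfl⟩ := hp hy
  exact (hf z x).trans (hx z hz)

theorem apply_eq_self_of_isOrthogonal_of_mem_span [NoZeroDivisors R] (hf : B.IsOrthogonal f)
    {u w : M} (hu : f u ∈ span R {u}) (hw : f w = w) (huw : B u w ≠ 0) : f u = u := by
  obtain ⟨a, ha⟩ := mem_span_singleton.1 hu
  have hmul : a * B u w = B u w := by
    simpa only [← ha, hw, map_smul, LinearMap.smul_apply, smul_eq_mul] using hf u w
  rw [← ha, (mul_eq_right₀ huw).1 hmul, one_smul]

theorem sup_span_singleton_inf_orthogonal [NoZeroDivisors R] {p : Submodule R M} {u w : M}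
    (hp : p ≤ B.orthogonal (span R {w})) (hwu : B w u ≠ 0) :
    (p ⊔ span R {u}) ⊓ B.orthogonal (span R {w}) = p := by
  have hdisj : span R {u} ⊓ B.orthogonal (span R {w}) = ⊥ := by
    rw [eq_bot_iff]
    rintro x ⟨hxu, hxw⟩
    obtain ⟨c, rfl⟩ := mem_span_singleton.1 hxu
    have hc : c * B w u = 0 := by
      simpa only [map_smul, smul_eq_mul] using hxw w (mem_span_singleton_self w)
    rw [(mul_eq_zero_iff_right hwu).1 hc, zero_smul]
    exact zero_mem _
  rw [sup_inf_assoc_of_le _ hp, hdisj, sup_bot_eq]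

end Isometry

theorem map_eq_self_iff_mem_invtSubmodule {K V : Type*} [DivisionRing K] [AddCommGroup V]
    [Module K V] (e : V ≃ₗ[K] V) (p : Submodule K V) [FiniteDimensional K p] :
    p.map e.toLinearMap = p ↔ p ∈ End.invtSubmodule e.toLinearMap := by
  rw [End.mem_invtSubmodule_iff_map_le]
  exact ⟨le_of_eq, fun h ↦ eq_of_le_of_finrank_eq h (e.finrank_map_eq p)⟩

section StandardFlag

variable {n : ℕ}

theorem stdVec_apply (m : ℕ) (i : Fin n) : stdVec n m i = if (i : ℕ) + 1 = m then 1 else 0 := by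
  by_cases hm : 1 ≤ m ∧ m ≤ n
  · rw [stdVec, dif_pos hm, Pi.single_apply]
    exact if_congr (by rw [Fin.ext_iff, eq_tsub_iff_add_eq_of_le hm.1]) rfl rfl
  · rw [stdVec, dif_neg hm, Pi.zero_apply, if_neg (by omega)]

theorem stdVec_succ (i : Fin n) : stdVec n (i + 1) = Pi.single i 1 := by
  ext j
  simp only [stdVec_apply, Pi.single_apply, Nat.add_right_cancel_iff, Fin.ext_iff]

theorem stdVec_mem_stdSub {m k : ℕ} (hm : 1 ≤ m) (hmk : m ≤ k) : stdVec n m ∈ stdSub n k :=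
  subset_span ⟨m, ⟨hm, hmk⟩, rfl⟩

theorem stdSub_mono {k m : ℕ} (h : k ≤ m) : stdSub n k ≤ stdSub n m :=
  span_mono (Set.image_mono (Set.Icc_subset_Icc_right h))

theorem stdSub_zero : stdSub n 0 = ⊥ := by
  simp [stdSub]

theorem stdSub_succ (k : ℕ) : stdSub n (k + 1) = stdSub n k ⊔ span ℂ {stdVec n (k + 1)} := by
  rw [stdSub, ← Set.insert_Icc_right_eq_Icc_add_one (by omega), Set.image_insert_eq, span_insert,
    sup_comm, stdSub]

theorem mem_stdSub_iff {k : ℕ} {x : Fin n → ℂ} :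
    x ∈ stdSub n k ↔ ∀ i : Fin n, k ≤ i → x i = 0 := by
  constructor
  · intro hx i hi
    induction hx using span_induction with
    | mem y hy =>
      obtain ⟨m, ⟨-, hmk⟩, rfl⟩ := hy
      rw [stdVec_apply, if_neg (by omega)]
    | zero => rfl
    | add y z _ _ hy hz => rw [Pi.add_apply, hy, hz, add_zero]
    | smul c y _ hy => rw [Pi.smul_apply, hy, smul_zero]
  · intro hx
    rw [pi_eq_sum_univ' x]
    refine sum_mem fun i _ ↦ ?_
    rcases le_or_gt k i with hki | hik
    · rw [hx i hki, zero_smul]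
      exact zero_mem _
    · rw [← stdVec_succ]
      exact smul_mem _ _ (stdVec_mem_stdSub i.1.succ_pos hik)

theorem forall_stdVec_mem_stdSub_iff {g : End ℂ (Fin n → ℂ)} :
    (∀ m, 1 ≤ m → m ≤ n → g (stdVec n m) ∈ stdSub n m) ↔
      ∀ m ≤ n, stdSub n m ∈ g.invtSubmodule := by
  constructor
  · intro h m hm
    refine span_le.2 ?_
    rintro _ ⟨i, ⟨hi, him⟩, rfl⟩
    exact stdSub_mono him (h i hi (him.trans hm))
  · intro h m hm hmn
    exact h m hmn (stdVec_mem_stdSub hm le_rfl)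

/-- The form `β` of `betaF` bundled as a bilinear form, so that orthogonal complements and
isometries can be taken with respect to it. -/
def betaForm (n : ℕ) : LinearMap.BilinForm ℂ (Fin n → ℂ) :=
  LinearMap.mk₂ ℂ (betaF n)
    (by simp [betaF, add_mul, Finset.sum_add_distrib])
    (by simp [betaF, mul_assoc, Finset.mul_sum])
    (by simp [betaF, mul_add, Finset.sum_add_distrib])
    (by simp [betaF, mul_left_comm, Finset.mul_sum])

theorem betaForm_apply (x y : Fin n → ℂ) : betaForm n x y = ∑ k : Fin n, x k * y k.rev :=
  rfl

theorem betaForm_single (i : Fin n) (x : Fin n → ℂ) : betaForm n (Pi.single i 1) x = x i.rev := by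
  simp [betaForm_apply, Pi.single_apply]

theorem betaForm_stdVec_stdVec {m : ℕ} (hm : 1 ≤ m) (hmn : m ≤ n) (k : ℕ) :
    betaForm n (stdVec n m) (stdVec n k) = if m + k = n + 1 then 1 else 0 := by
  obtain ⟨i, rfl⟩ : ∃ i : Fin n, m = i + 1 := ⟨⟨m - 1, by omega⟩, (Nat.sub_add_cancel hm).symm⟩
  rw [stdVec_succ, betaForm_single, stdVec_apply, Fin.val_rev]
  exact if_congr (by omega) rfl rfl

/-- For `k > n` the truncated `n - k` is still right: `stdSub n k = ⊤` and `stdSub n 0 = ⊥`. -/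
theorem orthogonal_stdSub (k : ℕ) : (betaForm n).orthogonal (stdSub n k) = stdSub n (n - k) := by
  ext x
  rw [LinearMap.BilinForm.mem_orthogonal_iff, mem_stdSub_iff]
  constructor
  · intro hx i hi
    have hmem : stdVec n (i.rev + 1) ∈ stdSub n k :=
      stdVec_mem_stdSub (by omega) (by rw [Fin.val_rev]; omega)
    simpa only [stdVec_succ, betaForm_single, Fin.rev_rev] using hx _ hmem
  · intro hx y hy
    rw [betaForm_apply]
    refine Finset.sum_eq_zero fun i _ ↦ ?_
    by_cases hik : k ≤ (i : ℕ)
    · rw [mem_stdSub_iff.1 hy i hik, zero_mul]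
    · rw [hx i.rev (by rw [Fin.val_rev]; omega), mul_zero]

end StandardFlag

section Stabilizer

variable {l : ℕ} {g : (Fin (2 * l) → ℂ) ≃ₗ[ℂ] (Fin (2 * l) → ℂ)}

theorem apply_stdVec_pair_of_mem_span (hl : 1 ≤ l) (hg : (betaForm (2 * l)).IsOrthogonal g)
    (hline : g (stdVec (2 * l) l) ∈ span ℂ {stdVec (2 * l) l})
    (hsub : g (stdVec (2 * l) l - stdVec (2 * l) (l + 1)) =
      stdVec (2 * l) l - stdVec (2 * l) (l + 1)) :
    g (stdVec (2 * l) l) = stdVec (2 * l) l ∧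
      g (stdVec (2 * l) (l + 1)) = stdVec (2 * l) (l + 1) := by
  have hpair : betaForm (2 * l) (stdVec (2 * l) l)
      (stdVec (2 * l) l - stdVec (2 * l) (l + 1)) ≠ 0 := by
    rw [map_sub, betaForm_stdVec_stdVec hl (by omega), betaForm_stdVec_stdVec hl (by omega),
      if_neg (by omega), if_pos (by omega)]
    norm_num
  have hpos : g (stdVec (2 * l) l) = stdVec (2 * l) l :=
    apply_eq_self_of_isOrthogonal_of_mem_span hg hline hsub hpair
  exact ⟨hpos, by rwa [map_sub, hpos, sub_right_inj] at hsub⟩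

theorem stdSub_sup_span_inf_orthogonal {m : ℕ} (hm : m < l) :
    (stdSub (2 * l) m ⊔ span ℂ {stdVec (2 * l) l}) ⊓
      (betaForm (2 * l)).orthogonal (span ℂ {stdVec (2 * l) (l + 1)}) = stdSub (2 * l) m := by
  refine sup_span_singleton_inf_orthogonal ?_ ?_
  · calc stdSub (2 * l) m = (betaForm (2 * l)).orthogonal (stdSub (2 * l) (2 * l - m)) := by
          rw [orthogonal_stdSub, Nat.sub_sub_self (by omega)]
      _ ≤ (betaForm (2 * l)).orthogonal (span ℂ {stdVec (2 * l) (l + 1)}) :=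
          LinearMap.BilinForm.orthogonal_le <| (span_singleton_le_iff_mem _ _).2 <|
            stdVec_mem_stdSub (by omega) (by omega)
  · rw [betaForm_stdVec_stdVec (by omega) (by omega), if_pos (by omega)]
    exact one_ne_zero

theorem stdSub_mem_invtSubmodule (hg : (betaForm (2 * l)).IsOrthogonal g)
    (hfix : g (stdVec (2 * l) (l + 1)) = stdVec (2 * l) (l + 1))
    (hsup : ∀ k < l, stdSub (2 * l) k ⊔ span ℂ {stdVec (2 * l) l} ∈
      End.invtSubmodule g.toLinearMap) {m : ℕ} (hm : m ≤ 2 * l) :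
    stdSub (2 * l) m ∈ End.invtSubmodule g.toLinearMap := by
  have hspan : (betaForm (2 * l)).orthogonal (span ℂ {stdVec (2 * l) (l + 1)}) ∈
      End.invtSubmodule g.toLinearMap := by
    refine orthogonal_mem_invtSubmodule_of_le_map hg ?_
    rw [map_span, Set.image_singleton, LinearEquiv.coe_coe, hfix]
  have hlt : ∀ k < l, stdSub (2 * l) k ∈ End.invtSubmodule g.toLinearMap := fun k hk ↦ by
    rw [← stdSub_sup_span_inf_orthogonal hk]
    exact End.invtSubmodule.inf_mem (hsup k hk) hspan
  rcases lt_trichotomy m l with hml | rfl | hml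
  · exact hlt m hml
  · cases m with
    | zero => exact stdSub_zero ▸ End.invtSubmodule.bot_mem _
    | succ k => exact stdSub_succ k ▸ hsup k k.lt_succ_self
  · rw [← Nat.sub_sub_self hm, ← orthogonal_stdSub]
    refine orthogonal_mem_invtSubmodule_of_le_map hg (ge_of_eq ?_)
    exact (map_eq_self_iff_mem_invtSubmodule g _).2 (hlt _ (by omega))

theorem FyEvenFlag_zero : FyEvenFlag l 0 = ⊥ := by
  simp [FyEvenFlag, isoFlagOf]

theorem FyEvenFlag_succ (hl : 1 ≤ l) (k : ℕ) :
    FyEvenFlag l (k + 1) = stdSub (2 * l) (min k (l - 1)) ⊔ span ℂ {stdVec (2 * l) l} := by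
  have hmin : min (k + 1) l = min k (l - 1) + 1 := by omega
  have himage : FyEvenVec l '' Set.Icc (1 + 1) (min k (l - 1) + 1) =
      stdVec (2 * l) '' Set.Icc 1 (min k (l - 1)) := by
    rw [← Set.image_add_const_Icc 1 1, Set.image_image]
    refine Set.image_congr fun m ⟨hm, _⟩ ↦ ?_
    rw [FyEvenVec, if_neg (by omega), Nat.add_sub_cancel]
  rw [FyEvenFlag, isoFlagOf, hmin, ← Set.insert_Icc_add_one_left_eq_Icc (by omega),
    Set.image_insert_eq, span_insert, sup_comm, himage]
  rfl

theorem actFlag_FyEvenFlag_eq_iff (hl : 1 ≤ l) :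
    actFlag (2 * l) g (FyEvenFlag l) = FyEvenFlag l ↔
      ∀ k < l, stdSub (2 * l) k ⊔ span ℂ {stdVec (2 * l) l} ∈ End.invtSubmodule g.toLinearMap := by
  simp only [funext_iff, actFlag, map_eq_self_iff_mem_invtSubmodule]
  constructor
  · intro h k hk
    simpa only [FyEvenFlag_succ hl, min_eq_left (Nat.le_sub_one_of_lt hk)] using h (k + 1)
  · rintro h (_ | k)
    · exact FyEvenFlag_zero ▸ End.invtSubmodule.bot_mem _
    · exact FyEvenFlag_succ hl k ▸ h _ (by omega)

theorem stmt_8_general (hl : 1 ≤ l) (hg : (betaForm (2 * l)).IsOrthogonal g) :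
    (g (stdVec (2 * l) l - stdVec (2 * l) (l + 1)) = stdVec (2 * l) l - stdVec (2 * l) (l + 1) ∧
        actFlag (2 * l) g (FyEvenFlag l) = FyEvenFlag l) ↔
      g (stdVec (2 * l) l) = stdVec (2 * l) l ∧
        g (stdVec (2 * l) (l + 1)) = stdVec (2 * l) (l + 1) ∧
        ∀ m, 1 ≤ m → m ≤ 2 * l → g (stdVec (2 * l) m) ∈ stdSub (2 * l) m := by
  rw [actFlag_FyEvenFlag_eq_iff hl]
  refine Iff.trans ?_ (and_congr_right' (and_congr_right' forall_stdVec_mem_stdSub_iff.symm))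
  constructor
  · rintro ⟨hsub, hsup⟩
    have hline : g (stdVec (2 * l) l) ∈ span ℂ {stdVec (2 * l) l} := by
      have hinv := hsup 0 hl
      rw [stdSub_zero, bot_sup_eq] at hinv
      exact hinv (mem_span_singleton_self _)
    obtain ⟨hpos, hneg⟩ := apply_stdVec_pair_of_mem_span hl hg hline hsub
    exact ⟨hpos, hneg, fun m ↦ stdSub_mem_invtSubmodule hg hneg hsup⟩
  · rintro ⟨hpos, hneg, hstd⟩
    refine ⟨by rw [map_sub, hpos, hneg], fun k hk ↦ ?_⟩
    refine End.invtSubmodule.sup_mem (hstd k (by omega)) ?_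
    rw [End.mem_invtSubmodule_iff_map_le, map_span, Set.image_singleton, LinearEquiv.coe_coe, hpos]

end Stabilizer

/-- The stabilizer of `F_y` in `K` is the Borel subgroup `B_{2l-2}`. -/
theorem stmt_8 (l : ℕ) (hl : 2 ≤ l) :
    {g | g ∈ Keven l ∧ actFlag (2 * l) g (FyEvenFlag l) = FyEvenFlag l} = BEvenSmall l := by
  ext g
  exact and_assoc.trans (and_congr_right fun hg ↦ stmt_8_general (by omega) hg.2)
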